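/- Let B ≥ 1 and λ ∈ ℝ, and let Λ be the (B+1)×(B+1) matrix defined in the context. For every natural number m and every column index l ∈ {0,…,B}, the last-row entry of Λ^m has the explicit form (Λ^m)_{B,l} = 1 − ∑_{k=0}^{B−1−l} (m choose k) · λ^k · (1−λ)^{m−k}, where the sum ranges over those k ∈ {0,…,B−1−l} with k ≤ m (equivalently, terms with k > m are zero since (m choose k) = 0). -/

import Mathlib

open Matrix Filter

/-- The `(B+1) × (B+1)` transition matrix `Λ`: diagonal entries `1 - λ` (except the
last one, which is `1`), subdiagonal entries `λ`, all other entries `0`. -/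
def Lam (B : ℕ) (lam : ℝ) : Matrix (Fin (B+1)) (Fin (B+1)) ℝ :=
  Matrix.of fun j l =>
    if (j : ℕ) = (l : ℕ) then (if (j : ℕ) < B then 1 - lam else 1)
    else if (j : ℕ) = (l : ℕ) + 1 then lam
    else 0

/-!
For `0 ≤ λ ≤ 1` the entry `(Λ ^ m)_{B, l}` is the probability that a walk started at `l`, moving up
one step with probability `λ` at each time and stopped at `B`, has reached `B` by time `m`; the sum
on the right is the probability of fewer than `B - l` upward moves. Conditioning on the first move
gives both sides the same recursion, which for the binomial sum is Pascal's rule and for the matrix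
is multiplication by `Λ` on the right. This recursion is an identity valid for every real `λ`.
-/

section BinomialPartialSum

variable {R : Type*} [CommSemiring R]

/-- The sum of the first `n` terms of the binomial expansion of `(x + y) ^ m`, in increasing powers
of `x`. The truncated exponent `m - k` is harmless because `m.choose k = 0` when `m < k`. For real
`x ∈ [0, 1]` and `y = 1 - x` this is the probability that a binomial variable with parameters
`m`, `x` is less than `n`. -/
def binomialPartialSum (x y : R) (m n : ℕ) : R :=
  ∑ k ∈ Finset.range n, (m.choose k : R) * x ^ k * y ^ (m - k)

lemma binomialPartialSum_zero_right (x y : R) (m : ℕ) : binomialPartialSum x y m 0 = 0 :=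
  Finset.sum_range_zero _

lemma binomialPartialSum_zero_succ (x y : R) (n : ℕ) : binomialPartialSum x y 0 (n + 1) = 1 := by
  simp [binomialPartialSum, Finset.sum_range_succ']

lemma choose_succ_mul_pow_mul_pow (x y : R) (m k : ℕ) :
    ((m + 1).choose (k + 1) : R) * x ^ (k + 1) * y ^ (m + 1 - (k + 1)) =
      y * ((m.choose (k + 1) : R) * x ^ (k + 1) * y ^ (m - (k + 1))) +
        x * ((m.choose k : R) * x ^ k * y ^ (m - k)) := by
  rw [Nat.choose_succ_succ', Nat.add_sub_add_right, Nat.cast_add]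
  rcases Nat.lt_or_ge m (k + 1) with hmk | hkm
  · rw [Nat.choose_eq_zero_of_lt hmk, Nat.cast_zero]
    ring
  · have pow_split : y ^ (m - k) = y * y ^ (m - (k + 1)) := by
      rw [← pow_succ']
      congr 1
      omega
    rw [pow_split]
    ring

lemma binomialPartialSum_succ_succ (x y : R) (m n : ℕ) :
    binomialPartialSum x y (m + 1) (n + 1) =
      y * binomialPartialSum x y m (n + 1) + x * binomialPartialSum x y m n := by
  simp only [binomialPartialSum, Finset.sum_range_succ' _ n, choose_succ_mul_pow_mul_pow,
    Finset.sum_add_distrib, ← Finset.mul_sum, Nat.choose_zero_right, Nat.sub_zero, pow_succ y m]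
  ring

end BinomialPartialSum

section Lam

variable {ι : Type*} {B : ℕ}

lemma Lam_col_castSucc (lam : ℝ) (l : Fin B) :
    (Lam B lam).col l.castSucc = Pi.single l.castSucc (1 - lam) + Pi.single l.succ lam := by
  ext j
  simp only [Lam, Matrix.col_apply, Matrix.of_apply, Pi.add_apply, Pi.single_apply, Fin.ext_iff,
    Fin.val_castSucc, Fin.val_succ]
  grind

lemma Lam_col_last (lam : ℝ) : (Lam B lam).col (Fin.last B) = Pi.single (Fin.last B) 1 := by
  ext j
  simp only [Lam, Matrix.col_apply, Matrix.of_apply, Pi.single_apply, Fin.ext_iff, Fin.val_last]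
  grind

lemma mul_Lam_apply_castSucc (A : Matrix ι (Fin (B + 1)) ℝ) (lam : ℝ) (i : ι) (l : Fin B) :
    (A * Lam B lam) i l.castSucc = (1 - lam) * A i l.castSucc + lam * A i l.succ :=
  calc (A * Lam B lam) i l.castSucc
    _ = A i ⬝ᵥ (Lam B lam).col l.castSucc := rfl
    _ = (1 - lam) * A i l.castSucc + lam * A i l.succ := by
      rw [Lam_col_castSucc, dotProduct_add, dotProduct_single, dotProduct_single, mul_comm,
        mul_comm lam]

lemma mul_Lam_apply_last (A : Matrix ι (Fin (B + 1)) ℝ) (lam : ℝ) (i : ι) :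
    (A * Lam B lam) i (Fin.last B) = A i (Fin.last B) :=
  calc (A * Lam B lam) i (Fin.last B)
    _ = A i ⬝ᵥ (Lam B lam).col (Fin.last B) := rfl
    _ = A i (Fin.last B) := by rw [Lam_col_last, dotProduct_single_one]

end Lam

/-- Explicit form of the last-row entries of the m-th power of Λ. -/
theorem Lam_pow_last_row (B : ℕ) (hB : 1 ≤ B) (lam : ℝ) (m : ℕ) (l : Fin (B+1)) :
    (Lam B lam ^ m) (Fin.last B) l =
      1 - ∑ k ∈ Finset.range (B - (l : ℕ)),
        (m.choose k : ℝ) * lam ^ k * (1 - lam) ^ (m - k) := by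
  have distance_castSucc (l : Fin B) : B - (l.castSucc : ℕ) = B - l.succ + 1 := by
    rw [Fin.val_castSucc, Fin.val_succ]
    omega
  change _ = 1 - binomialPartialSum lam (1 - lam) m (B - l)
  induction m generalizing l with
  | zero =>
    cases l using Fin.lastCases with
    | last => simp [binomialPartialSum_zero_right]
    | cast l =>
      rw [distance_castSucc, binomialPartialSum_zero_succ, sub_self, pow_zero,
        Matrix.one_apply_ne (Fin.castSucc_lt_last l).ne']
  | succ m ih =>
    rw [pow_succ]
    cases l using Fin.lastCases with
    | last =>
      rw [mul_Lam_apply_last, ih, Fin.val_last, Nat.sub_self, binomialPartialSum_zero_right,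
        binomialPartialSum_zero_right]
    | cast l =>
      rw [mul_Lam_apply_castSucc, ih, ih, distance_castSucc, binomialPartialSum_succ_succ]
      ring
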